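/- arXiv:2402.17849 — 7 statements merged into one kernel-verified Lean document; each statement's English description precedes it below -/
import Mathlib

section
/- For every integer n ≥ 1, the number of 3-compositions of n equals the number of ordered pairs of compositions of n, and both are equal to 4^(n−1). -/
def TC (n : ℕ) (l : List (ℕ × Fin 3)) : Prop :=
  (∀ p ∈ l, 0 < p.1) ∧ (l.map Prod.fst).sum = n ∧ (l.map Prod.snd).getLast? = some 0

def tcStep : Option (Fin 3) → List (ℕ × Fin 3) → List (ℕ × Fin 3)
  | some c, l => (1, c) :: l
  | none, [] => []
  | none, (a, c) :: t => (a + 1, c) :: t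

lemma tcStep_mem (n : ℕ) (o : Option (Fin 3)) (l : List (ℕ × Fin 3)) (h : TC n l) :
    TC (n + 1) (tcStep o l) := by
  obtain ⟨h1, h2, h3⟩ := h
  rcases l with _ | ⟨⟨a, c⟩, t⟩
  · simp at h3
  · rcases o with _ | d
    · refine ⟨?_, ?_, ?_⟩
      · intro p hp
        simp only [tcStep, List.mem_cons] at hp
        rcases hp with rfl | hp
        · simp
        · exact h1 p (by simp [hp])
      · simp [tcStep] at h2 ⊢; omega
      · simpa [tcStep] using h3
    · refine ⟨?_, ?_, ?_⟩
      · intro p hp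
        simp only [tcStep, List.mem_cons] at hp
        rcases hp with rfl | hp
        · simp
        · exact h1 p (by simpa using hp)
      · simp [tcStep] at h2 ⊢; omega
      · simp only [tcStep, List.map_cons, List.getLast?_cons_cons] at h3 ⊢
        exact h3

lemma tc_card_succ (n : ℕ) (hn : 1 ≤ n) :
    Nat.card {l // TC (n + 1) l} = 4 * Nat.card {l // TC n l} := by
  have hb : Function.Bijective (fun x : Option (Fin 3) × {l // TC n l} =>
      (⟨tcStep x.1 x.2.1, tcStep_mem n x.1 x.2.1 x.2.2⟩ : {l // TC (n + 1) l})) := by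
    constructor
    · rintro ⟨o, l, hl⟩ ⟨o', l', hl'⟩ h
      simp only [Subtype.mk.injEq] at h
      obtain ⟨h1, h2, h3⟩ := hl
      obtain ⟨h1', h2', h3'⟩ := hl'
      rcases l with _ | ⟨⟨a, c⟩, t⟩
      · simp at h3
      rcases l' with _ | ⟨⟨a', c'⟩, t'⟩
      · simp at h3'
      have ha := h1 (a, c) (by simp)
      have ha' := h1' (a', c') (by simp)
      simp only at ha ha'
      rcases o with _ | d <;> rcases o' with _ | d' <;> simp [tcStep] at h ⊢ <;> grind
    · rintro ⟨l, h1, h2, h3⟩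
      rcases l with _ | ⟨⟨a, c⟩, t⟩
      · simp at h3
      have ha := h1 (a, c) (by simp)
      simp only at ha
      simp only [List.map_cons, List.sum_cons] at h2
      by_cases h : a = 1
      · subst h
        refine ⟨⟨some c, t, ?_, by omega, ?_⟩, rfl⟩
        · intro p hp
          exact h1 p (by simp [hp])
        · rcases t with _ | ⟨q, t⟩
          · simp at h2; omega
          · simpa only [List.map_cons, List.getLast?_cons_cons] using h3
      · obtain ⟨b, rfl⟩ : ∃ b, a = b + 1 := ⟨a - 1, by omega⟩
        refine ⟨⟨none, (b, c) :: t, ?_, ?_, ?_⟩, rfl⟩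
        · intro p hp
          simp only [List.mem_cons] at hp
          rcases hp with rfl | hp
          · simp only; omega
          · exact h1 p (by simp [hp])
        · simp; omega
        · simpa using h3
  rw [← Nat.card_eq_of_bijective _ hb, Nat.card_prod]
  simp

lemma tc_card_one : Nat.card {l // TC 1 l} = 1 := by
  rw [Nat.card_eq_one_iff_unique]
  have key : ∀ l, TC 1 l → l = [(1, 0)] := by
    rintro l ⟨h1, h2, h3⟩
    rcases l with _ | ⟨⟨a, c⟩, t⟩
    · simp at h3
    have ha := h1 (a, c) (by simp)
    rcases t with _ | ⟨⟨b, d⟩, t⟩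
    · simp at h2 h3
      simp [h2, h3]
    · have hb := h1 (b, d) (by simp)
      simp at h2 ha hb
      omega
  exact ⟨⟨fun x y => Subtype.ext ((key _ x.2).trans (key _ y.2).symm)⟩,
    ⟨⟨[(1, 0)], by simp [TC]⟩⟩⟩

lemma tc_card (n : ℕ) (hn : 1 ≤ n) : Nat.card {l // TC n l} = 4 ^ (n - 1) := by
  induction n, hn using Nat.le_induction with
  | base => simpa using tc_card_one
  | succ n hn ih =>
    rw [tc_card_succ n hn, ih, ← pow_succ']
    congr 1
    omega

/-- For every integer `n ≥ 1`, the number of 3-compositions of `n`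
(compositions with parts colored by one of three colors, the last part having
the first color) equals the number of ordered pairs of compositions of `n`,
and both are equal to `4^(n-1)`.

A 3-composition is encoded as a list of pairs `(a, c)` with `a` a positive part
and `c : Fin 3` its color; the color of the last part must be `0` (color 1). -/
theorem stmt_0 (n : ℕ) (hn : 1 ≤ n) :
    Nat.card {l : List (ℕ × Fin 3) // (∀ p ∈ l, 0 < p.1) ∧
        (l.map Prod.fst).sum = n ∧ (l.map Prod.snd).getLast? = some 0} =
      Nat.card (Composition n × Composition n) ∧
    Nat.card (Composition n × Composition n) = 4 ^ (n - 1) := by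
  have h : Nat.card (Composition n × Composition n) = 4 ^ (n - 1) := by
    rw [Nat.card_prod, Nat.card_eq_fintype_card, composition_card, ← mul_pow]
    norm_num
  exact ⟨(tc_card n hn).trans h.symm, h⟩
end

section
/- For all integers k ≥ 1 and n ≥ 1, the number of k-compositions of n equals the number of g-compositions of n with g = k+1. -/
def encK {k : ℕ} (l : List (ℕ × Fin k)) : List ℕ :=
  l.flatMap (fun p => p.1 :: List.replicate (p.2 : ℕ) 0)

lemma encK_cons {k : ℕ} (p : ℕ × Fin k) (l : List (ℕ × Fin k)) :
    encK (p :: l) = p.1 :: (List.replicate (p.2 : ℕ) 0 ++ encK l) := by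
  simp [encK]

def decK : List ℕ → ℕ × List (ℕ × ℕ)
  | [] => (0, [])
  | a :: m => if a = 0 then ((decK m).1 + 1, (decK m).2)
      else (0, (a, (decK m).1) :: (decK m).2)

lemma decK_rep (c : ℕ) (m : List ℕ) :
    decK (List.replicate c 0 ++ m) = ((decK m).1 + c, (decK m).2) := by
  induction c with
  | zero => simp
  | succ c ih => simp [List.replicate_succ, decK, ih]; omega

lemma decK_encK {k : ℕ} (l : List (ℕ × Fin k)) (h : ∀ p ∈ l, 0 < p.1) :
    decK (encK l) = (0, l.map (fun p => (p.1, (p.2 : ℕ)))) := by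
  induction l with
  | nil => simp [encK, decK]
  | cons p l ih =>
    have h1 : p.1 ≠ 0 := (h p (by simp)).ne'
    have h2 := ih (fun q hq => h q (by simp [hq]))
    simp [encK_cons, decK, h1, decK_rep, h2]

lemma sum_encK {k : ℕ} (l : List (ℕ × Fin k)) :
    (encK l).sum = (l.map Prod.fst).sum := by
  induction l with
  | nil => simp [encK]
  | cons p l ih => simp [encK_cons, ih]

lemma prefix_encK {k : ℕ} (l : List (ℕ × Fin k)) (h : ∀ p ∈ l, 0 < p.1) (c j : ℕ)
    (hp : List.replicate j 0 <+: List.replicate c 0 ++ encK l) : j ≤ c := by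
  induction c generalizing j with
  | zero =>
    cases j with
    | zero => simp
    | succ j =>
      cases l with
      | nil => simp [encK] at hp
      | cons p l =>
        have h1 := h p (by simp)
        simp [encK_cons, List.replicate_succ, List.cons_prefix_cons] at hp
        omega
  | succ c ih =>
    cases j with
    | zero => simp
    | succ j =>
      simp only [List.replicate_succ, List.cons_append, List.cons_prefix_cons, true_and] at hp
      have := ih j hp
      omega

lemma infix_encK {k : ℕ} (l : List (ℕ × Fin k)) (h : ∀ p ∈ l, 0 < p.1) (c : ℕ) (hc : c < k) :
    ¬ (List.replicate k 0 <:+: List.replicate c 0 ++ encK l) := by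
  induction l generalizing c with
  | nil =>
    intro hi
    have := hi.length_le
    simp [encK] at this
    omega
  | cons p l ih =>
    induction c with
    | zero =>
      intro hi
      have hpre := prefix_encK (p :: l) h 0 k
      simp only [List.replicate_zero, List.nil_append] at hi hpre
      rw [encK_cons] at hi hpre
      rcases List.infix_cons_iff.1 hi with h1 | h1
      · have := hpre h1
        omega
      · exact ih (fun q hq => h q (by simp [hq])) _ p.2.2 h1
    | succ c ihc =>
      intro hi
      have hpre := prefix_encK (p :: l) h (c + 1) k
      simp only [List.replicate_succ, List.cons_append] at hi hpre
      rcases List.infix_cons_iff.1 hi with h1 | h1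
      · have := hpre h1
        omega
      · exact ihc (by omega) h1

lemma exists_encK {k : ℕ} (hk : 1 ≤ k) (m : List ℕ) (h : ¬ (List.replicate k 0 <:+: m)) :
    ∃ c < k, ∃ l : List (ℕ × Fin k), (∀ p ∈ l, 0 < p.1) ∧
      m = List.replicate c 0 ++ encK l := by
  induction m with
  | nil => exact ⟨0, hk, [], by simp, by simp [encK]⟩
  | cons a m ih =>
    obtain ⟨c, hc, l, hl, rfl⟩ := ih (fun hi => h (List.infix_cons_iff.2 (Or.inr hi)))
    rcases Nat.eq_zero_or_pos a with rfl | ha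
    · refine ⟨c + 1, ?_, l, hl, by simp [List.replicate_succ]⟩
      by_contra hlt
      obtain rfl : k = c + 1 := by omega
      exact h ⟨[], encK l, by simp [List.replicate_succ]⟩
    · refine ⟨0, hk, (a, ⟨c, hc⟩) :: l, ?_, by simp [encK_cons]⟩
      intro p hp
      rcases List.mem_cons.1 hp with rfl | hp
      · exact ha
      · exact hl p hp

lemma last_encK {k : ℕ} (l : List (ℕ × Fin k)) (h : ∀ p ∈ l, 0 < p.1) :
    (∃ p, l.getLast? = some p ∧ (p.2 : ℕ) = 0) ↔ ∃ a, (encK l).getLast? = some a ∧ 0 < a := by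
  rcases List.eq_nil_or_concat l with rfl | ⟨l, ⟨a, c⟩, rfl⟩
  · simp [encK]
  · have ha : 0 < a := h (a, c) (by simp)
    rcases hc : (c : ℕ) with _ | d
    · simp [encK, hc, ha]
    · simp [encK, hc, List.replicate_succ', - List.cons_append]
      intro x hx
      rw [← List.cons_append, List.getLast?_append] at hx
      simpa using hx.symm


/-- For all integers `k ≥ 1` and `n ≥ 1`, the number of
`k`-compositions of `n` equals the number of `g`-compositions of `n` with
`g = k + 1`.

A `k`-composition is encoded as a list of pairs `(a, c)` with `a` a positive
part and `c : Fin k` its color; the last part must have color `0` (color 1).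
A `g`-composition is a list of non-negative integers summing to `n`, whose
first and last entries are positive, and containing no run of `g - 1 = k`
consecutive zeros (so every maximal run of zeros has length at most `g - 2`). -/
theorem stmt_1 (k n : ℕ) (hk : 1 ≤ k) (hn : 1 ≤ n) :
    Nat.card {l : List (ℕ × Fin k) // (∀ p ∈ l, 0 < p.1) ∧
        (l.map Prod.fst).sum = n ∧
        (∃ p, l.getLast? = some p ∧ (p.2 : ℕ) = 0)} =
    Nat.card {l : List ℕ // l.sum = n ∧
        (∃ a, l.head? = some a ∧ 0 < a) ∧
        (∃ a, l.getLast? = some a ∧ 0 < a) ∧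
        ¬ (List.replicate k 0 <:+: l)} := by
  have key : ∀ l : List (ℕ × Fin k), (∀ p ∈ l, 0 < p.1) ∧
        (l.map Prod.fst).sum = n ∧
        (∃ p, l.getLast? = some p ∧ (p.2 : ℕ) = 0) →
      ((encK l).sum = n ∧
        (∃ a, (encK l).head? = some a ∧ 0 < a) ∧
        (∃ a, (encK l).getLast? = some a ∧ 0 < a) ∧
        ¬ (List.replicate k 0 <:+: encK l)) := by
    rintro l ⟨h1, h2, h3⟩
    refine ⟨by rw [sum_encK, h2], ?_, (last_encK l h1).1 h3, ?_⟩
    · cases l with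
      | nil => simp at h3
      | cons p l => exact ⟨p.1, by simp [encK_cons], h1 p (by simp)⟩
    · have := infix_encK l h1 0 hk
      simpa using this
  refine Nat.card_eq_of_bijective (fun l => ⟨encK l.1, key l.1 l.2⟩) ⟨?_, ?_⟩
  · rintro ⟨l, hl⟩ ⟨l', hl'⟩ he
    have he' : encK l = encK l' := congrArg Subtype.val he
    have h1 := decK_encK l hl.1
    rw [he', decK_encK l' hl'.1] at h1
    have h2 := (Prod.ext_iff.1 h1).2
    have hinj : Function.Injective (fun p : ℕ × Fin k => (p.1, (p.2 : ℕ))) := by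
      rintro ⟨a, c⟩ ⟨b, d⟩ h
      simpa [Fin.ext_iff] using h
    exact Subtype.ext (hinj.list_map h2).symm
  · rintro ⟨m, hs, hh, hlast, hi⟩
    obtain ⟨c, hc, l, hl, rfl⟩ := exists_encK hk m hi
    cases c with
    | succ c => simp [List.replicate_succ] at hh
    | zero =>
      simp only [List.replicate_zero, List.nil_append] at hs hlast
      exact ⟨⟨l, hl, by rw [← sum_encK, hs], (last_encK l hl).2 hlast⟩, Subtype.ext (by simp)⟩
end

section
/- For all integers n ≥ 1 and h ≥ 1, the number of pairs (P,i), where P is a Dyck path of length 2n and i is a peak of P of height h, equals the number of Dyck bridges of length 2n whose first step is a down step and which cross the x-axis exactly h−1 times. -/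
/-- The step associated to a letter: `true` is an up step `+1`, `false` a down step `-1`. -/
def stepVal (b : Bool) : ℤ := if b then 1 else -1

/-- Partial sum `S_i`: the sum of the first `i` steps of the word `w`. -/
def psum {L : ℕ} (w : Fin L → Bool) (i : ℕ) : ℤ :=
  ∑ j : Fin L, if (j : ℕ) < i then stepVal (w j) else 0

/-- A Dyck bridge: a `±1` word whose total sum is `0`. -/
def IsBridge {L : ℕ} (w : Fin L → Bool) : Prop := psum w L = 0

/-- A Dyck path: a bridge all of whose partial sums are nonnegative. -/
def IsDyck {L : ℕ} (w : Fin L → Bool) : Prop :=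
  IsBridge w ∧ ∀ i : ℕ, 0 ≤ psum w i

/-- A peak at (0-based) position `i`: step `i` is up and step `i+1` is down. -/
def IsPeak {L : ℕ} (w : Fin L → Bool) (i : ℕ) : Prop :=
  ∃ j k : Fin L, (j : ℕ) = i ∧ (k : ℕ) = i + 1 ∧ w j = true ∧ w k = false

/-- The height of the peak at (0-based) position `i`, i.e. the altitude
reached by its up step. -/
def peakHeight {L : ℕ} (w : Fin L → Bool) (i : ℕ) : ℤ := psum w (i + 1)

/-- A crossing of the x-axis at (1-based) index `i`: `0 < i < L`, `S_i = 0`,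
and the steps `w_i`, `w_{i+1}` (1-based) are equal. -/
def IsCrossing {L : ℕ} (w : Fin L → Bool) (i : ℕ) : Prop :=
  0 < i ∧ i < L ∧ psum w i = 0 ∧
    ∃ j k : Fin L, (j : ℕ) + 1 = i ∧ (k : ℕ) = i ∧ w j = w k

open Classical in
noncomputable def ind (p : Prop) : ℕ := if p then 1 else 0

theorem ind_true {p : Prop} (h : p) : ind p = 1 := if_pos h
theorem ind_false {p : Prop} (h : ¬ p) : ind p = 0 := if_neg h
@[simp] theorem ind_T : ind True = 1 := if_pos trivial
@[simp] theorem ind_F : ind False = 0 := if_neg id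

theorem card_filter_ind {α : Type*} (s : Finset α) (p : α → Prop) [DecidablePred p] :
    (s.filter p).card = ∑ a ∈ s, ind (p a) := by
  rw [Finset.card_filter]
  refine Finset.sum_congr rfl fun a _ => ?_
  by_cases h : p a <;> simp [ind, h]

theorem psum_zero' {L : ℕ} (w : Fin L → Bool) : psum w 0 = 0 := by simp [psum]

theorem psum_cons {L : ℕ} (b : Bool) (w : Fin L → Bool) (i : ℕ) :
    psum (Fin.cons b w : Fin (L+1) → Bool) (i+1) = stepVal b + psum w i := by
  simp [psum, Fin.sum_univ_succ]

theorem sum_cons {m : ℕ} (f : (Fin (m+1) → Bool) → ℕ) :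
    ∑ w, f w = ∑ w : Fin m → Bool, f (Fin.cons true w) + ∑ w : Fin m → Bool, f (Fin.cons false w) := by
  rw [← (Fin.consEquiv (fun _ : Fin (m+1) => Bool)).sum_comp, Fintype.sum_prod_type]
  simp [Fin.consEquiv]

def ND {m : ℕ} (k : ℤ) (w : Fin m → Bool) : Prop :=
  k + psum w m = 0 ∧ ∀ i : ℕ, 0 ≤ k + psum w i

theorem ND_cons {m : ℕ} (k : ℤ) (b : Bool) (w : Fin m → Bool) :
    ND k (Fin.cons b w : Fin (m+1) → Bool) ↔ 0 ≤ k ∧ ND (k + stepVal b) w := by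
  unfold ND
  rw [psum_cons]
  constructor
  · rintro ⟨h1, h2⟩
    refine ⟨by simpa [psum_zero'] using h2 0, by linarith, fun i => ?_⟩
    have := h2 (i+1)
    rw [psum_cons] at this
    linarith
  · rintro ⟨h0, h1, h2⟩
    refine ⟨by linarith, fun i => ?_⟩
    cases i with
    | zero => simpa [psum_zero'] using h0
    | succ i => rw [psum_cons]; linarith [h2 i]

theorem ND_neg {m : ℕ} {k : ℤ} {w : Fin m → Bool} (h : ND k w) : 0 ≤ k := by
  simpa [psum_zero'] using h.2 0

theorem IsPeak_cons_succ {m : ℕ} (b : Bool) (w : Fin m → Bool) (i : ℕ) :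
    IsPeak (Fin.cons b w : Fin (m+1) → Bool) (i+1) ↔ IsPeak w i := by
  constructor
  · rintro ⟨j, k, hj, hk, h1, h2⟩
    obtain ⟨j, rfl⟩ := Fin.exists_succ_eq.2 (show j ≠ 0 by rintro rfl; simp at hj)
    obtain ⟨k, rfl⟩ := Fin.exists_succ_eq.2 (show k ≠ 0 by rintro rfl; simp at hk)
    exact ⟨j, k, by simpa using hj, by simpa using hk, by simpa using h1, by simpa using h2⟩
  · rintro ⟨j, k, hj, hk, h1, h2⟩
    exact ⟨j.succ, k.succ, by simpa using hj, by simpa using hk, by simpa using h1, by simpa using h2⟩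

theorem IsPeak_cons_zero {m : ℕ} (b b' : Bool) (w : Fin m → Bool) :
    IsPeak (Fin.cons b (Fin.cons b' w : Fin (m+1) → Bool) : Fin (m+2) → Bool) 0 ↔
      b = true ∧ b' = false := by
  constructor
  · rintro ⟨j, k, hj, hk, h1, h2⟩
    obtain rfl : j = 0 := by ext; simpa using hj
    obtain rfl : k = (0 : Fin (m+1)).succ := by ext; simpa using hk
    rw [Fin.cons_succ] at h2
    exact ⟨by simpa using h1, by simpa using h2⟩
  · rintro ⟨rfl, rfl⟩
    exact ⟨0, (0 : Fin (m+1)).succ, by simp, by simp, by simp, by rw [Fin.cons_succ]; simp⟩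

def Same {m : ℕ} (w : Fin m → Bool) (i : ℕ) : Prop :=
  ∃ j k : Fin m, (j : ℕ) = i ∧ (k : ℕ) = i + 1 ∧ w j = w k

theorem Same_cons_succ {m : ℕ} (b : Bool) (w : Fin m → Bool) (i : ℕ) :
    Same (Fin.cons b w : Fin (m+1) → Bool) (i+1) ↔ Same w i := by
  constructor
  · rintro ⟨j, k, hj, hk, h1⟩
    obtain ⟨j, rfl⟩ := Fin.exists_succ_eq.2 (show j ≠ 0 by rintro rfl; simp at hj)
    obtain ⟨k, rfl⟩ := Fin.exists_succ_eq.2 (show k ≠ 0 by rintro rfl; simp at hk)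
    exact ⟨j, k, by simpa using hj, by simpa using hk, by simpa using h1⟩
  · rintro ⟨j, k, hj, hk, h1⟩
    exact ⟨j.succ, k.succ, by simpa using hj, by simpa using hk, by simpa using h1⟩

theorem Same_cons_zero {m : ℕ} (b b' : Bool) (w : Fin m → Bool) :
    Same (Fin.cons b (Fin.cons b' w : Fin (m+1) → Bool) : Fin (m+2) → Bool) 0 ↔ b = b' := by
  constructor
  · rintro ⟨j, k, hj, hk, h1⟩
    obtain rfl : j = 0 := by ext; simpa using hj
    obtain rfl : k = (0 : Fin (m+1)).succ := by ext; simpa using hk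
    rw [Fin.cons_succ] at h1
    simpa using h1
  · rintro rfl
    exact ⟨0, (0 : Fin (m+1)).succ, by simp, by simp, by rw [Fin.cons_succ]; simp⟩

noncomputable def cF (m : ℕ) (k : ℤ) : ℕ := ∑ w : Fin m → Bool, ind (ND k w)

theorem cF_neg (m : ℕ) (k : ℤ) (hk : k < 0) : cF m k = 0 := by
  unfold cF
  refine Finset.sum_eq_zero fun w _ => ind_false fun h => ?_
  have := ND_neg h
  omega

theorem cF_zero (k : ℤ) (hk : k ≠ 0) : cF 0 k = 0 := by
  unfold cF
  refine Finset.sum_eq_zero fun w _ => ind_false fun h => ?_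
  have := h.1
  rw [psum_zero'] at this
  omega

theorem cF_zero_zero : cF 0 0 = 1 := by
  simp [cF, ND, psum]

theorem cF_succ (m : ℕ) (k : ℤ) (hk : 0 ≤ k) : cF (m+1) k = cF m (k+1) + cF m (k-1) := by
  unfold cF
  rw [sum_cons]
  simp only [ND_cons, hk, true_and, stepVal]
  simp [sub_eq_add_neg]

/-- crossings of `w` starting at height `k`, previous step `b` -/
noncomputable def cX {m : ℕ} (k : ℤ) (b : Bool) (w : Fin m → Bool) : ℕ :=
  ∑ i ∈ Finset.range m, ind (k + psum w i = 0 ∧ Same (Fin.cons b w : Fin (m+1) → Bool) i)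

theorem cX_cons {m : ℕ} (k : ℤ) (b b' : Bool) (w : Fin m → Bool) :
    cX k b (Fin.cons b' w : Fin (m+1) → Bool) =
      cX (k + stepVal b') b' w + ind (k = 0 ∧ b = b') := by
  unfold cX
  rw [Finset.sum_range_succ']
  simp only [psum_cons, Same_cons_succ, Same_cons_zero, psum_zero', add_zero, add_assoc]

noncomputable def cB (m : ℕ) (k : ℤ) (b : Bool) (c : ℕ) : ℕ :=
  ∑ w : Fin m → Bool, ind (k + psum w m = 0 ∧ cX k b w = c)

theorem cB_succ (m : ℕ) (k : ℤ) (hk : k ≠ 0) (b : Bool) (c : ℕ) :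
    cB (m+1) k b c = cB m (k+1) true c + cB m (k-1) false c := by
  unfold cB
  rw [sum_cons]
  simp only [cX_cons, psum_cons, hk, false_and, ind_F, add_zero, stepVal, ← add_assoc]
  simp [sub_eq_add_neg]

theorem cB_succ_zero (m : ℕ) (b : Bool) (c : ℕ) :
    cB (m+1) 0 b (c+1) = cB m 1 true (if b then c else c+1) + cB m (-1) false (if b then c+1 else c) := by
  unfold cB
  rw [sum_cons]
  simp only [cX_cons, psum_cons, stepVal, ← add_assoc]
  cases b <;> simp

theorem cB_succ_zero' (m : ℕ) (b : Bool) :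
    cB (m+1) 0 b 0 = if b then cB m (-1) false 0 else cB m 1 true 0 := by
  unfold cB
  rw [sum_cons]
  simp only [cX_cons, psum_cons, stepVal, ← add_assoc]
  cases b <;> simp

theorem cB_eq (m : ℕ) : ∀ (k : ℤ) (b : Bool) (c : ℕ), cB m k b c = cF m (|k| + 2 * c) := by
  induction m with
  | zero =>
    intro k b c
    by_cases h : k = 0 ∧ c = 0
    · obtain ⟨rfl, rfl⟩ := h
      simp [cF_zero_zero, cB, psum, cX]
    · rw [cF_zero]
      · unfold cB
        refine Finset.sum_eq_zero fun w _ => ind_false fun h' => h ?_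
        simp [psum, cX] at h'
        exact ⟨h'.1, h'.2.symm⟩
      · intro h'
        have := abs_nonneg k
        exact h ⟨abs_eq_zero.1 (by omega), by omega⟩
  | succ m ih =>
    intro k b c
    rw [cF_succ _ _ (by positivity)]
    by_cases hk : k = 0
    · subst hk
      cases c with
      | zero =>
        rw [cB_succ_zero', cF_neg m (|0| + 2 * ((0:ℕ):ℤ) - 1) (by simp)]
        cases b <;> simp [ih]
      | succ c =>
        rw [cB_succ_zero]
        cases b
        · simp [ih]
          congr 2 <;> ring
        · simp [ih]
          rw [add_comm]
          congr 2 <;> ring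
    · rw [cB_succ _ _ hk, ih, ih]
      rcases lt_or_gt_of_ne hk with h | h
      · rw [abs_of_neg h, abs_of_neg (show k - 1 < 0 by omega), abs_of_nonpos (show k + 1 ≤ 0 by omega),
          add_comm]
        congr 2 <;> ring
      · rw [abs_of_pos h, abs_of_pos (show k + 1 > 0 by omega), abs_of_nonneg (show 0 ≤ k - 1 by omega)]
        congr 2 <;> ring

noncomputable def cG (h : ℤ) (m : ℕ) (k : ℤ) : ℕ :=
  ∑ w : Fin m → Bool, ∑ i ∈ Finset.range m,
    ind (ND k w ∧ IsPeak w i ∧ k + peakHeight w i = h)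

theorem cG_neg (h : ℤ) (m : ℕ) (k : ℤ) (hk : k < 0) : cG h m k = 0 := by
  unfold cG
  refine Finset.sum_eq_zero fun w _ => Finset.sum_eq_zero fun i _ => ind_false fun h => ?_
  have := ND_neg h.1
  omega

theorem cG_one (h : ℤ) (k : ℤ) : cG h 1 k = 0 := by
  unfold cG
  refine Finset.sum_eq_zero fun w _ => Finset.sum_eq_zero fun i _ => ind_false fun h => ?_
  obtain ⟨-, ⟨j, k, h1, h2, -⟩, -⟩ := h
  omega

theorem cG_succ (h : ℤ) (m : ℕ) (k : ℤ) (hk : 0 ≤ k) :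
    cG h (m+2) k = cG h (m+1) (k+1) + cG h (m+1) (k-1) + if k + 1 = h then cF m k else 0 := by
  have key : ∀ b : Bool, (∑ w : Fin (m+1) → Bool, ∑ i ∈ Finset.range (m+2),
          ind (ND k (Fin.cons b w : Fin (m+2) → Bool) ∧ IsPeak (Fin.cons b w : Fin (m+2) → Bool) i ∧
        k + peakHeight (Fin.cons b w : Fin (m+2) → Bool) i = h)) =
      cG h (m+1) (k + stepVal b) + if k + 1 = h ∧ b = true then cF m k else 0 := by
    intro b
    simp_rw [Finset.sum_range_succ' _ (m+1)]
    rw [Finset.sum_add_distrib]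
    congr 1
    · unfold cG
      simp only [ND_cons, hk, true_and, IsPeak_cons_succ, peakHeight, psum_cons, ← add_assoc]
    · rw [sum_cons]
      simp only [ND_cons, hk, true_and, IsPeak_cons_zero, peakHeight, psum_cons, psum_zero']
      cases b
      · simp
      · simp only [stepVal, cF]
        by_cases hh : k + 1 = h
        · have : 0 ≤ k + 1 := by omega
          simp [hh]
          simp [← hh, this]
        · simp [hh]
  rw [cG, sum_cons, key, key]
  simp [stepVal, sub_eq_add_neg]
  ring

theorem cG_eq (h m : ℕ) : ∀ k : ℕ, cG (h+1) (m+1) k =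
    ∑ l ∈ Finset.range (min k h + 1), cF m (k + 2 * h + 1 - 2 * l) := by
  induction m with
  | zero =>
    intro k
    rw [cG_one]
    symm
    refine Finset.sum_eq_zero fun l hl => cF_zero _ ?_
    rw [Finset.mem_range] at hl
    omega
  | succ m ih =>
    intro k
    have e : ∑ l ∈ Finset.range (min k h + 1), cF (m+1) (k + 2 * h + 1 - 2 * l) =
       ∑ l ∈ Finset.range (min k h + 1), cF m (k + 1 + 2 * h + 1 - 2 * l) +
       ∑ l ∈ Finset.range (min k h + 1), cF m (k - 1 + 2 * h + 1 - 2 * l) := by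
      rw [← Finset.sum_add_distrib]
      refine Finset.sum_congr rfl fun l hl => ?_
      rw [Finset.mem_range] at hl
      rw [cF_succ _ _ (by omega)]
      congr 2 <;> ring
    have e1 : cG (h+1) (m+1) (k-1) =
        ∑ l ∈ Finset.range (min k (h+1)), cF m (k - 1 + 2 * h + 1 - 2 * l) := by
      cases k with
      | zero => simpa using cG_neg _ _ _ (by simp)
      | succ k =>
        have := ih k
        rw [show min (k+1) (h+1) = min k h + 1 by omega]
        simpa using this
    have e2 := ih (k+1)
    push_cast at e2
    rw [cG_succ _ _ _ (by positivity), e, e1, e2]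
    rcases lt_trichotomy k h with hk | hk | hk
    · rw [show min (k+1) h = k+1 by omega, show min k h = k by omega,
        show min k (h+1) = k by omega, Finset.sum_range_succ _ (k+1),
        Finset.sum_range_succ (fun l : ℕ => cF m ((k:ℤ) - 1 + 2 * h + 1 - 2 * l)) k,
        if_neg (by omega)]
      push_cast
      rw [show (k:ℤ) + 1 + 2 * h + 1 - 2 * (k + 1) = k - 1 + 2 * h + 1 - 2 * k by ring]
      ring
    · subst hk
      rw [min_self, show min (k+1) k = k by omega, show min k (k+1) = k by omega,
        Finset.sum_range_succ (fun l : ℕ => cF m ((k:ℤ) - 1 + 2 * k + 1 - 2 * l)) k,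
        if_pos rfl, show (k:ℤ) - 1 + 2 * k + 1 - 2 * k = k by ring]
      ring
    · rw [show min (k+1) h = h by omega, show min k h = h by omega,
        show min k (h+1) = h+1 by omega, if_neg (by omega)]
      ring

theorem lhs_eq (h : ℤ) (m : ℕ) : Nat.card {p : (Fin m → Bool) × ℕ //
        IsDyck p.1 ∧ IsPeak p.1 p.2 ∧ peakHeight p.1 p.2 = h} = cG h m 0 := by
  classical
  have : Nat.card {p : (Fin m → Bool) × ℕ //
        IsDyck p.1 ∧ IsPeak p.1 p.2 ∧ peakHeight p.1 p.2 = h} =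
      ((Finset.univ ×ˢ Finset.range m).filter (fun p : (Fin m → Bool) × ℕ =>
        IsDyck p.1 ∧ IsPeak p.1 p.2 ∧ peakHeight p.1 p.2 = h)).card := by
    apply Nat.subtype_card
    rintro ⟨w, i⟩
    simp only [Finset.mem_filter, Finset.mem_product, Finset.mem_univ, Finset.mem_range, true_and,
      and_iff_right_iff_imp]
    rintro ⟨-, ⟨j, k, hj, -⟩, -⟩
    omega
  rw [this, card_filter_ind, Finset.sum_product]
  simp [cG, ND, IsDyck, IsBridge]

theorem cross_eq {m : ℕ} (w : Fin m → Bool) :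
    Nat.card {i : ℕ // IsCrossing (Fin.cons false w : Fin (m+1) → Bool) i} = cX (-1) false w := by
  classical
  have : Nat.card {i : ℕ // IsCrossing (Fin.cons false w : Fin (m+1) → Bool) i} =
      (((Finset.range m).filter (fun i => -1 + psum w i = 0 ∧
        Same (Fin.cons false w : Fin (m+1) → Bool) i)).map ⟨Nat.succ, Nat.succ_injective⟩).card := by
    apply Nat.subtype_card
    intro i
    cases i with
    | zero => simp [IsCrossing]
    | succ i =>
      simp only [Finset.mem_map, Finset.mem_filter, Finset.mem_range, Function.Embedding.coeFn_mk,
        IsCrossing, psum_cons, Same, stepVal]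
      simp
  rw [this, Finset.card_map, card_filter_ind, cX]

theorem rhs_eq (c : ℕ) (m : ℕ) : Nat.card {w : Fin (m+1) → Bool //
        IsBridge w ∧ (∃ j : Fin (m+1), (j : ℕ) = 0 ∧ w j = false) ∧
        Nat.card {i : ℕ // IsCrossing w i} = c} = cB m (-1) false c := by
  classical
  have e : ∀ (w : Fin (m+1) → Bool), (∃ j : Fin (m+1), (j : ℕ) = 0 ∧ w j = false) ↔ w 0 = false := by
    intro w
    constructor
    · rintro ⟨j, hj, h⟩
      obtain rfl : j = 0 := by ext; simpa using hj
      exact h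
    · intro h
      exact ⟨0, rfl, h⟩
  rw [Nat.card_eq_fintype_card, Fintype.card_subtype, card_filter_ind, sum_cons]
  simp only [e, cross_eq, IsBridge, psum_cons, cB]
  simp [stepVal]

/-- For all integers `n ≥ 1` and `h ≥ 1`, the number of pairs
`(P, i)`, where `P` is a Dyck path of length `2n` and `i` is a peak of `P`
of height `h`, equals the number of Dyck bridges of length `2n` whose first
step is a down step and which cross the x-axis exactly `h - 1` times. -/
theorem stmt_3 (n h : ℕ) (hn : 1 ≤ n) (hh : 1 ≤ h) :
    Nat.card {p : (Fin (2 * n) → Bool) × ℕ //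
        IsDyck p.1 ∧ IsPeak p.1 p.2 ∧ peakHeight p.1 p.2 = (h : ℤ)} =
    Nat.card {w : Fin (2 * n) → Bool //
        IsBridge w ∧ (∃ j : Fin (2 * n), (j : ℕ) = 0 ∧ w j = false) ∧
        Nat.card {i : ℕ // IsCrossing w i} = h - 1} := by
  obtain ⟨m, hm⟩ : ∃ m, 2 * n = m + 1 := ⟨2 * n - 1, by omega⟩
  obtain ⟨h, rfl⟩ : ∃ g, h = g + 1 := ⟨h - 1, by omega⟩
  rw [hm, lhs_eq, rhs_eq, cB_eq]
  have := cG_eq h m 0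
  push_cast at this ⊢
  rw [this]
  simp
  congr 1
  ring
end

section
/- For every integer n ≥ 1, the total number of strict left-to-right maxima in all Dyck bridges of length 2n equals 4^(n−1). -/
/-- Extension of a word by `false`. -/
def ext0 {L : ℕ} (w : Fin L → Bool) (k : ℕ) : Bool := if h : k < L then w ⟨k, h⟩ else false

theorem ext0_fin {L : ℕ} (w : Fin L → Bool) (k : Fin L) : ext0 w k = w k := by
  simp [ext0]

theorem psum_succ' {L : ℕ} (w : Fin L → Bool) (k : ℕ) (hk : k < L) :
    psum w (k + 1) = psum w k + stepVal (ext0 w k) := by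
  have h1 : stepVal (ext0 w k) = ∑ j : Fin L, if j = ⟨k, hk⟩ then stepVal (w j) else 0 := by
    simp [ext0, hk]
  rw [h1, psum, psum, ← Finset.sum_add_distrib]
  refine Finset.sum_congr rfl fun j _ => ?_
  have : j = ⟨k, hk⟩ ↔ (j : ℕ) = k := Fin.ext_iff
  simp only [this]
  split_ifs <;> first | omega | simp

theorem stepVal_cases (b : Bool) :
    (b = true ∧ stepVal b = 1) ∨ (b = false ∧ stepVal b = -1) := by
  cases b <;> simp [stepVal]

theorem stepVal_not (b : Bool) : stepVal (!b) = - stepVal b := by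
  cases b <;> simp [stepVal]

theorem isPeak_iff {L : ℕ} (w : Fin L → Bool) (i : ℕ) :
    IsPeak w i ↔ i + 1 < L ∧ ext0 w i = true ∧ ext0 w (i + 1) = false := by
  constructor
  · rintro ⟨j, k, hj, hk, h1, h2⟩
    refine ⟨hk ▸ k.2, ?_, ?_⟩
    · rw [← hj, ext0_fin, h1]
    · rw [← hk, ext0_fin, h2]
  · rintro ⟨h, h1, h2⟩
    refine ⟨⟨i, by omega⟩, ⟨i + 1, h⟩, rfl, rfl, ?_, ?_⟩
    · rw [← h1, ← ext0_fin w]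
    · rw [← h2, ← ext0_fin w]

/-- First-passage form of the condition. -/
def Good {L : ℕ} (w : Fin L → Bool) (i : ℕ) : Prop :=
  psum w L = 0 ∧ i + 1 < L ∧ ext0 w i = true ∧ ext0 w (i + 1) = false ∧
    1 ≤ psum w (i + 1) ∧ ∀ k, k ≤ i → psum w k < psum w (i + 1)

theorem ltr_iff {L : ℕ} (w : Fin L → Bool) (i : ℕ) :
    (IsBridge w ∧ IsPeak w i ∧ 1 ≤ peakHeight w i ∧
      ∀ j, IsPeak w j → j < i → peakHeight w j < peakHeight w i) ↔ Good w i := by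
  simp only [IsBridge, peakHeight, Good, isPeak_iff]
  constructor
  · rintro ⟨hb, ⟨hi, h1, h2⟩, hh, hp⟩
    refine ⟨hb, hi, h1, h2, hh, ?_⟩
    have hlast := psum_succ' w i (by omega)
    rw [h1] at hlast
    have hst : stepVal true = 1 := by simp [stepVal]
    rw [hst] at hlast
    by_contra! hcon
    have hex : ∃ k, k ≤ i ∧ psum w (i + 1) ≤ psum w k := hcon
    classical
    let k := Nat.find hex
    obtain ⟨hki, hk⟩ : k ≤ i ∧ psum w (i + 1) ≤ psum w k := Nat.find_spec hex
    have hmin : ∀ m, m < k → ¬ (m ≤ i ∧ psum w (i + 1) ≤ psum w m) :=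
      fun m hm => Nat.find_min hex hm
    clear_value k
    obtain _ | k := k
    · rw [psum_zero'] at hk; omega
    have key : ∀ d, k + d + 1 ≤ i →
        ext0 w (k + d) = true ∧ psum w (i + 1) ≤ psum w (k + d + 1) := by
      intro d
      induction d with
      | zero =>
        intro _
        refine ⟨?_, hk⟩
        have := hmin k (by omega)
        have h3 := psum_succ' w k (by omega)
        rcases stepVal_cases (ext0 w k) with ⟨h, h'⟩ | ⟨h, h'⟩
        · exact h
        · exfalso; apply this; constructor <;> omega
      | succ d ih =>
        intro hd
        obtain ⟨ih1, ih2⟩ := ih (by omega)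
        have h3 := psum_succ' w (k + d + 1) (by omega)
        rcases stepVal_cases (ext0 w (k + d + 1)) with ⟨h, h'⟩ | ⟨h, h'⟩
        · refine ⟨h, ?_⟩
          rw [← add_assoc k d 1]; omega
        · have := hp (k + d) ⟨by omega, ih1, h⟩ (by omega)
          omega
    have := (key (i - 1 - k) (by omega)).2
    rw [show k + (i - 1 - k) + 1 = i by omega] at this
    omega
  · rintro ⟨hb, hi, h1, h2, hh, hp⟩
    exact ⟨hb, ⟨hi, h1, h2⟩, hh, fun j _ hj => hp (j + 1) (by omega)⟩

/-- Delete the step after position `i` and flip everything after it. -/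
def fold {N : ℕ} (w : Fin (N + 1) → Bool) (i : ℕ) : Fin N → Bool :=
  fun j => if (j : ℕ) ≤ i then ext0 w j else !(ext0 w (j + 1))

theorem ext0_fold {N : ℕ} (w : Fin (N + 1) → Bool) (i j : ℕ) (hj : j < N) :
    ext0 (fold w i) j = if j ≤ i then ext0 w j else !(ext0 w (j + 1)) := by
  conv_lhs => rw [ext0]
  simp [hj, fold]

theorem psum_fold_le {N : ℕ} (w : Fin (N + 1) → Bool) (i : ℕ) (hi : i < N) (k : ℕ)
    (hk : k ≤ i + 1) : psum (fold w i) k = psum w k := by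
  induction k with
  | zero => simp [psum_zero']
  | succ k ih =>
    rw [psum_succ' _ _ (by omega), psum_succ' _ _ (by omega), ih (by omega),
      ext0_fold _ _ _ (by omega), if_pos (by omega)]

theorem psum_fold_ge {N : ℕ} (w : Fin (N + 1) → Bool) (i : ℕ) (hi : i < N)
    (hw : ext0 w (i + 1) = false) (d : ℕ) (hd : i + 1 + d ≤ N) :
    psum (fold w i) (i + 1 + d) = 2 * psum w (i + 1) - 1 - psum w (i + 1 + d + 1) := by
  induction d with
  | zero =>
    have h := psum_succ' w (i + 1) (by omega)
    have hst : stepVal false = -1 := by simp [stepVal]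
    rw [hw, hst] at h
    rw [add_zero, psum_fold_le w i hi _ le_rfl]
    omega
  | succ d ih =>
    have ih := ih (by omega)
    have h := psum_succ' w (i + 1 + d + 1) (by omega)
    have h' := psum_succ' (fold w i) (i + 1 + d) (by omega)
    rw [ext0_fold _ _ _ (by omega), if_neg (by omega), stepVal_not] at h'
    rw [← add_assoc (i + 1) d 1]
    omega

theorem psum_fold_last {N : ℕ} (w : Fin (N + 1) → Bool) (i : ℕ) (hi : i < N)
    (hw : ext0 w (i + 1) = false) :
    psum (fold w i) N = 2 * psum w (i + 1) - 1 - psum w (N + 1) := by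
  have := psum_fold_ge w i hi hw (N - (i + 1)) (by omega)
  rwa [show i + 1 + (N - (i + 1)) = N by omega] at this

theorem fold_inj {N : ℕ} (w w' : Fin (N + 1) → Bool) (i i' : ℕ) (h : Good w i) (h' : Good w' i')
    (he : fold w i = fold w' i') : w = w' ∧ i = i' := by
  obtain ⟨a1, a2, a3, a4, a5, a6⟩ := h
  obtain ⟨b1, b2, b3, b4, b5, b6⟩ := h'
  have e1 := psum_fold_last w i (by omega) a4
  have e2 := psum_fold_last w' i' (by omega) b4
  rw [he] at e1
  have eh : psum w (i + 1) = psum w' (i' + 1) := by omega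
  have p1 := psum_fold_le w i (by omega)
  have p2 := psum_fold_le w' i' (by omega)
  rw [he] at p1
  have ei : i = i' := by
    rcases lt_trichotomy i i' with hl | hl | hl
    · have := p1 (i + 1) le_rfl
      have := p2 (i + 1) (by omega)
      have := b6 (i + 1) (by omega)
      omega
    · exact hl
    · have := p2 (i' + 1) le_rfl
      have := p1 (i' + 1) (by omega)
      have := a6 (i' + 1) (by omega)
      omega
  subst ei
  refine ⟨?_, rfl⟩
  have hb : ∀ j, j < N →
      (if j ≤ i then ext0 w j else !(ext0 w (j + 1))) =
      (if j ≤ i then ext0 w' j else !(ext0 w' (j + 1))) := by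
    intro j hj
    rw [← ext0_fold _ _ _ hj, ← ext0_fold _ _ _ hj, he]
  funext j
  rw [← ext0_fin w, ← ext0_fin w']
  rcases lt_trichotomy (j : ℕ) (i + 1) with hl | hl | hl
  · have := hb j (by omega)
    rwa [if_pos (by omega), if_pos (by omega)] at this
  · rw [hl, a4, b4]
  · have := hb (j - 1) (by omega)
    rw [if_neg (by omega), if_neg (by omega), show (j : ℕ) - 1 + 1 = j by omega] at this
    simpa using this

theorem psum_parity {L : ℕ} (w : Fin L → Bool) (k : ℕ) (hk : k ≤ L) :
    psum w k % 2 = (k : ℤ) % 2 := by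
  induction k with
  | zero => simp [psum_zero']
  | succ k ih =>
    have := ih (by omega)
    have h := psum_succ' w k (by omega)
    rcases stepVal_cases (ext0 w k) with ⟨_, h'⟩ | ⟨_, h'⟩ <;> push_cast <;> omega

theorem fold_surj {N : ℕ} (hN : N % 2 = 1) (v : Fin N → Bool) (hv : 0 < psum v N) :
    ∃ w i, Good w i ∧ fold w i = v := by
  have hpar := psum_parity v N le_rfl
  obtain ⟨h, hh⟩ : ∃ h : ℤ, psum v N = 2 * h - 1 := ⟨(psum v N + 1) / 2, by omega⟩
  have hex : ∃ k, h ≤ psum v k := ⟨N, by omega⟩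
  classical
  let k := Nat.find hex
  have hk : h ≤ psum v k := Nat.find_spec hex
  have hmin : ∀ m, m < k → ¬ (h ≤ psum v m) := fun m hm => Nat.find_min hex hm
  have hkN : k ≤ N := Nat.find_min' hex (by omega)
  clear_value k
  obtain _ | i := k
  · rw [psum_zero'] at hk; omega
  have h0 := hmin i (by omega)
  have h3 := psum_succ' v i (by omega)
  obtain ⟨hup, hi⟩ : ext0 v i = true ∧ psum v (i + 1) = h := by
    rcases stepVal_cases (ext0 v i) with ⟨h1, h'⟩ | ⟨h1, h'⟩
    · exact ⟨h1, by omega⟩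
    · omega
  let w : Fin (N + 1) → Bool := fun j =>
    if (j : ℕ) ≤ i then ext0 v j else if (j : ℕ) = i + 1 then false else !(ext0 v (j - 1))
  have hw : ∀ j, j < N + 1 → ext0 w j =
      if j ≤ i then ext0 v j else if j = i + 1 then false else !(ext0 v (j - 1)) := by
    intro j hj
    conv_lhs => rw [ext0]
    simp [hj, w]
  have hf : fold w i = v := by
    funext j
    rw [fold]
    split_ifs with hj
    · rw [hw _ (by omega), if_pos hj, ext0_fin]
    · rw [hw _ (by omega), if_neg (by omega), if_neg (by omega)]
      simp [ext0_fin]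
  have hw1 : ext0 w (i + 1) = false := by
    rw [hw _ (by omega), if_neg (by omega), if_pos rfl]
  have hle := psum_fold_le w i (by omega)
  have hlast := psum_fold_last w i (by omega) hw1
  rw [hf] at hle hlast
  have hi1 := hle (i + 1) le_rfl
  refine ⟨w, i, ⟨by omega, by omega, ?_, hw1, by omega, ?_⟩, hf⟩
  · rw [hw _ (by omega), if_pos le_rfl, hup]
  · intro m hm
    have := hmin m (by omega)
    have := hle m (by omega)
    omega

theorem psum_not {L : ℕ} (w : Fin L → Bool) (k : ℕ) :
    psum (fun j => !(w j)) k = - psum w k := by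
  simp only [psum, ← Finset.sum_neg_distrib, stepVal_not]
  refine Finset.sum_congr rfl fun j _ => ?_
  split_ifs <;> simp

theorem card_pos {N : ℕ} (hN : N % 2 = 1) :
    2 * Nat.card {v : Fin N → Bool // 0 < psum v N} = 2 ^ N := by
  have e : {v : Fin N → Bool // 0 < psum v N} ≃ {v : Fin N → Bool // ¬ 0 < psum v N} :=
    { toFun := fun v => ⟨fun j => !(v.1 j), by have := v.2; rw [psum_not]; omega⟩
      invFun := fun v => ⟨fun j => !(v.1 j), by
        have := v.2
        have := psum_parity v.1 N le_rfl
        rw [psum_not]; omega⟩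
      left_inv := fun v => by simp
      right_inv := fun v => by simp }
  have h1 := Nat.card_congr (Equiv.sumCompl fun v : Fin N → Bool => 0 < psum v N)
  rw [Nat.card_sum, ← Nat.card_congr e] at h1
  rw [two_mul, h1]
  simp

theorem card_ltr (L N : ℕ) (hL : L = N + 1) (hN : N % 2 = 1) :
    2 * Nat.card {p : (Fin L → Bool) × ℕ //
        IsBridge p.1 ∧ IsPeak p.1 p.2 ∧ 1 ≤ peakHeight p.1 p.2 ∧
        ∀ j, IsPeak p.1 j → j < p.2 → peakHeight p.1 j < peakHeight p.1 p.2} = 2 ^ N := by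
  subst hL
  simp only [ltr_iff]
  rw [← card_pos hN]
  congr 1
  refine Nat.card_congr (Equiv.ofBijective
    (fun p => (⟨fold p.1.1 p.1.2, ?_⟩ : {v : Fin N → Bool // 0 < psum v N})) ⟨?_, ?_⟩)
  · obtain ⟨⟨w, i⟩, a1, a2, a3, a4, a5, a6⟩ := p
    have := psum_fold_last w i (by omega) a4
    change 1 ≤ psum w (i + 1) at a5
    change psum w (N + 1) = 0 at a1
    change 0 < psum (fold w i) N
    omega
  · rintro ⟨⟨w, i⟩, h⟩ ⟨⟨w', i'⟩, h'⟩ he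
    have := fold_inj w w' i i' h h' (congrArg Subtype.val he)
    simp [this.1, this.2]
  · rintro ⟨v, hv⟩
    obtain ⟨w, i, h, hf⟩ := fold_surj hN v hv
    exact ⟨⟨(w, i), h⟩, Subtype.ext hf⟩

/-- For every integer `n ≥ 1`, the total number of strict
left-to-right maxima in all Dyck bridges of length `2n` equals `4^(n-1)`.
A strict left-to-right maximum is a peak whose height is at least `1` and
strictly greater than the height of every peak occurring earlier. -/
theorem stmt_6 (n : ℕ) (hn : 1 ≤ n) :
    Nat.card {p : (Fin (2 * n) → Bool) × ℕ //
        IsBridge p.1 ∧ IsPeak p.1 p.2 ∧ 1 ≤ peakHeight p.1 p.2 ∧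
        ∀ j, IsPeak p.1 j → j < p.2 → peakHeight p.1 j < peakHeight p.1 p.2} =
      4 ^ (n - 1) := by
  have h := card_ltr (2 * n) (2 * n - 1) (by omega) (by omega)
  obtain ⟨m, rfl⟩ : ∃ m, n = m + 1 := ⟨n - 1, by omega⟩
  have e : 2 ^ (2 * (m + 1) - 1) = 2 * 4 ^ (m + 1 - 1) := by
    rw [show 2 * (m + 1) - 1 = 2 * m + 1 by omega, pow_succ, pow_mul]
    simp [mul_comm]
  rw [e] at h
  omega
end

section
/- Let S be a finite set of integers, let s ∈ S, and let n ≥ 1. Let b_n(s) be the total number of occurrences of the step s in all bridges of length n over S, i.e., the number of pairs (w, i) where w = (w_1,…,w_n) ∈ S^n satisfies w_1+⋯+w_n = 0 and w_i = s. Then n divides b_n(s). -/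
/-- Let `S` be a finite set of integers, `s ∈ S`, and `n ≥ 1`.
Let `b_n(s)` be the total number of occurrences of the step `s` in all bridges
of length `n` over `S`, i.e. the number of pairs `(w, i)` with `w ∈ S^n`,
`w_1 + ⋯ + w_n = 0` and `w_i = s`.  Then `n` divides `b_n(s)`. -/
theorem stmt_15 (S : Finset ℤ) (s : ℤ) (hs : s ∈ S) (n : ℕ) (hn : 1 ≤ n) :
    n ∣ Nat.card {p : (Fin n → ℤ) × Fin n //
      (∀ i, p.1 i ∈ S) ∧ (∑ i, p.1 i) = 0 ∧ p.1 p.2 = s} := by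
  let z : Fin n := ⟨0, hn⟩
  let e : {p : (Fin n → ℤ) × Fin n //
      (∀ i, p.1 i ∈ S) ∧ (∑ i, p.1 i) = 0 ∧ p.1 p.2 = s} ≃
      {w : Fin n → ℤ // (∀ i, w i ∈ S) ∧ (∑ i, w i) = 0 ∧ w z = s} × Fin n :=
    { toFun := fun p => (⟨fun j => p.1.1 (Equiv.swap z p.1.2 j),
        fun i => p.2.1 _,
        (Equiv.sum_comp (Equiv.swap z p.1.2) p.1.1).trans p.2.2.1,
        by simpa using p.2.2.2⟩, p.1.2)
      invFun := fun q => ⟨(fun j => q.1.1 (Equiv.swap z q.2 j), q.2),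
        fun i => q.1.2.1 _,
        (Equiv.sum_comp (Equiv.swap z q.2) q.1.1).trans q.1.2.2.1,
        by simpa using q.1.2.2.2⟩
      left_inv := by
        rintro ⟨⟨w, i⟩, h⟩
        simp
      right_inv := by
        rintro ⟨⟨w, h⟩, i⟩
        simp }
  rw [Nat.card_congr e, Nat.card_prod, Nat.card_fin]
  exact Dvd.intro_left _ rfl
end

section
/- For every integer n ≥ 1, the sum over all compositions of n of the product of the parts equals the Fibonacci number F_{2n}. (Equivalently, the number of decorated compositions of n, i.e., compositions in which each part of size k carries one of k possible labels, is F_{2n}.) -/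
def stmtInc {n : ℕ} (c : Composition (n + 1)) : Composition (n + 2) where
  blocks := (c.blocks.headI + 1) :: c.blocks.tail
  blocks_pos := by
    intro i hi
    rcases List.mem_cons.1 hi with h | h
    · omega
    · exact c.blocks_pos (List.mem_of_mem_tail h)
  blocks_sum := by
    have h := c.blocks_sum
    rcases hb : c.blocks with _ | ⟨a, l⟩
    · simp [hb] at h
    · simp [hb] at h ⊢
      omega

def stmtOne {n : ℕ} (c : Composition (n + 1)) : Composition (n + 2) where
  blocks := 1 :: c.blocks
  blocks_pos := by
    intro i hi
    rcases List.mem_cons.1 hi with h | h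
    · omega
    · exact c.blocks_pos h
  blocks_sum := by
    have h := c.blocks_sum
    simp [h]
    omega

theorem stmt_blocks_cons {n : ℕ} (c : Composition (n + 1)) :
    ∃ a l, c.blocks = (a + 1) :: l := by
  rcases hb : c.blocks with _ | ⟨a, l⟩
  · have h := c.blocks_sum
    simp [hb] at h
  · have : 0 < a := c.blocks_pos (by simp [hb])
    exact ⟨a - 1, l, by congr; omega⟩

theorem stmt_bij (n : ℕ) : Function.Bijective
    (Sum.elim stmtOne stmtInc : Composition (n + 1) ⊕ Composition (n + 1) → Composition (n + 2)) := by
  constructor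
  · rintro (c | c) (d | d) h <;> obtain ⟨a, l, hc⟩ := stmt_blocks_cons c <;>
      obtain ⟨b, m, hd⟩ := stmt_blocks_cons d <;>
      have h2 := congrArg Composition.blocks h <;>
      simp [stmtOne, stmtInc, hc, hd] at h2
    · congr 1; ext1; simp [hc, hd, h2]
    · congr 1; ext1; simp [hc, hd, h2]
  · intro c
    obtain ⟨a, l, hc⟩ := stmt_blocks_cons c
    have hs := c.blocks_sum
    have hp : ∀ i ∈ l, 0 < i := fun i hi => c.blocks_pos (by simp [hc, hi])
    rw [hc, List.sum_cons] at hs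
    rcases a with _ | a
    · refine ⟨Sum.inl ⟨l, fun {i} hi => hp i hi, by omega⟩, ?_⟩
      ext1
      simp [stmtOne, hc]
    · refine ⟨Sum.inr ⟨(a + 1) :: l, ?_, by rw [List.sum_cons]; omega⟩, ?_⟩
      · intro i hi
        rcases List.mem_cons.1 hi with h | h
        · omega
        · exact hp i h
      · ext1
        simp [stmtInc, hc]

theorem stmt_sum (n : ℕ) (f : Composition (n + 2) → ℕ) :
    ∑ c, f c = ∑ c, f (stmtOne c) + ∑ c, f (stmtInc c) := by
  rw [← (stmt_bij n).sum_comp f, Fintype.sum_sum_type]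
  rfl

theorem stmt_aux (n : ℕ) :
    ∑ c : Composition (n + 1), c.blocks.prod = Nat.fib (2 * n + 2) ∧
    ∑ c : Composition (n + 1), c.blocks.tail.prod = Nat.fib (2 * n + 1) := by
  induction n with
  | zero =>
    have hu : (Finset.univ : Finset (Composition (0 + 1))) = {Composition.single 1 one_pos} := by
      symm
      apply Finset.eq_univ_of_card
      rw [composition_card]
      rfl
    rw [hu, Finset.sum_singleton, Finset.sum_singleton]
    simp [Composition.single_blocks]
  | succ n ih =>
    have h1 : ∀ c : Composition (n + 1),
        (stmtInc c).blocks.prod = c.blocks.prod + c.blocks.tail.prod := by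
      intro c
      obtain ⟨a, l, hc⟩ := stmt_blocks_cons c
      simp [stmtInc, hc]
      ring
    have f1 : Nat.fib (2 * n + 3) = Nat.fib (2 * n + 1) + Nat.fib (2 * n + 2) := Nat.fib_add_two
    have f2 : Nat.fib (2 * n + 4) = Nat.fib (2 * n + 2) + Nat.fib (2 * n + 3) := Nat.fib_add_two
    have e1 : 2 * (n + 1) + 2 = 2 * n + 4 := by ring
    have e2 : 2 * (n + 1) + 1 = 2 * n + 3 := by ring
    rw [e1, e2, stmt_sum, stmt_sum]
    simp only [h1, Finset.sum_add_distrib]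
    simp only [stmtOne, stmtInc, List.prod_cons, List.tail_cons, one_mul, ih.1, ih.2]
    omega

/-- For every integer `n ≥ 1`, the sum over all compositions of
`n` of the product of the parts equals the Fibonacci number `F_{2n}`.
(Equivalently, the number of decorated compositions of `n` is `F_{2n}`.) -/
theorem stmt_17 (n : ℕ) (hn : 1 ≤ n) :
    ∑ c : Composition n, c.blocks.prod = Nat.fib (2 * n) := by
  obtain ⟨m, rfl⟩ : ∃ m, n = m + 1 := ⟨n - 1, by omega⟩
  exact (stmt_aux m).1
end

section
/- For every integer n ≥ 1, let C_o(n) be the number of compositions of n whose first part is odd and C_e(n) be the number of compositions of n whose first part is even. Then C_o(n) − C_e(n) = (2^(n−1) + 2·(−1)^(n−1))/3, which is the number of closed walks of length n−1 starting and ending at a fixed vertex of the complete graph on 3 vertices. -/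
theorem card_split {α : Type*} [Finite α] (P Q : α → Prop) :
    Nat.card {f // P f ∧ Q f} + Nat.card {f // P f ∧ ¬ Q f} = Nat.card {f // P f} := by
  classical
  have := Fintype.ofFinite α
  simp only [Nat.card_eq_fintype_card, Fintype.card_subtype, ← Finset.filter_filter]
  exact Finset.card_filter_add_card_filter_not _

theorem comp_even_succ (n : ℕ) :
    Nat.card {c : Composition (n+1) // ∃ a, c.blocks.head? = some a ∧ Even a} =
    Nat.card {c : Composition n // ∃ a, c.blocks.head? = some a ∧ Odd a} := by
  symm
  refine Nat.card_eq_of_bijective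
    (fun c => ⟨⟨c.1.blocks.modifyHead (· + 1), ?_, ?_⟩, ?_⟩) ⟨?_, ?_⟩
  · obtain ⟨⟨l, hl, hs⟩, a, ha, ho⟩ := c
    rcases l with _ | ⟨b, l⟩
    · simp at ha
    · intro i hi
      simp at hi hl
      rcases hi with rfl | hi
      · omega
      · exact hl.2 i hi
  · obtain ⟨⟨l, hl, hs⟩, a, ha, ho⟩ := c
    rcases l with _ | ⟨b, l⟩
    · simp at ha
    · simp at hs ⊢
      omega
  · obtain ⟨⟨l, hl, hs⟩, a, ha, ho⟩ := c
    rcases l with _ | ⟨b, l⟩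
    · simp at ha
    · simp at ha ⊢
      subst ha
      exact ho.add_one
  · rintro ⟨⟨l, hl, hs⟩, a, ha, ho⟩ ⟨⟨l', hl', hs'⟩, a', ha', ho'⟩ h
    rcases l with _ | ⟨b, l⟩
    · simp at ha
    rcases l' with _ | ⟨b', l'⟩
    · simp at ha'
    simp at h
    simp [h]
  · rintro ⟨⟨l, hl, hs⟩, a, ha, ho⟩
    rcases l with _ | ⟨b, l⟩
    · simp at ha
    simp at ha
    subst ha
    have hb : 0 < b := hl (by simp)
    have h2 : 2 ≤ b := by
      obtain ⟨k, hk⟩ := ho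
      omega
    have hod : Odd (b - 1) := by
      obtain ⟨k, hk⟩ := ho
      exact ⟨k - 1, by omega⟩
    refine ⟨⟨⟨(b - 1) :: l, ?_, ?_⟩, b - 1, ?_, hod⟩, ?_⟩
    · intro i hi
      simp at hi hl
      rcases hi with rfl | hi
      · omega
      · exact hl.2 i hi
    · simp at hs ⊢
      omega
    · simp
    · simp
      omega

theorem comp_total (n : ℕ) (hn : 1 ≤ n) :
    Nat.card {c : Composition n // ∃ a, c.blocks.head? = some a ∧ Odd a} +
    Nat.card {c : Composition n // ∃ a, c.blocks.head? = some a ∧ Even a} = 2 ^ (n - 1) := by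
  have key := card_split (fun _ : Composition n => True)
    (fun c => ∃ a, c.blocks.head? = some a ∧ Odd a)
  have e0 : Nat.card {c : Composition n // True} = 2 ^ (n - 1) := by
    rw [← composition_card n, ← Nat.card_eq_fintype_card]
    exact Nat.card_congr (Equiv.subtypeUnivEquiv fun _ => trivial)
  rw [e0] at key
  rw [← key]
  congr 1
  · exact Nat.card_congr (Equiv.subtypeEquivRight fun c => by simp)
  · refine Nat.card_congr (Equiv.subtypeEquivRight fun c => ?_)
    obtain ⟨l, hl, hs⟩ := c
    rcases l with _ | ⟨b, l⟩
    · simp at hs; omega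
    · simp

def PW (n : ℕ) (f : Fin (n+1) → Fin 3) : Prop :=
  f 0 = 0 ∧ ∀ i j : Fin (n+1), (j : ℕ) = (i : ℕ) + 1 → f i ≠ f j

theorem PW_snoc (n : ℕ) (f : Fin (n+1) → Fin 3) (x : Fin 3) :
    PW (n+1) (Fin.snoc (α := fun _ => Fin 3) f x) ↔ PW n f ∧ f (Fin.last n) ≠ x := by
  constructor
  · rintro ⟨h0, h⟩
    refine ⟨⟨?_, ?_⟩, ?_⟩
    · rw [← Fin.castSucc_zero, Fin.snoc_castSucc] at h0
      exact h0
    · intro i j hij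
      have := h i.castSucc j.castSucc (by simpa using hij)
      simpa using this
    · have := h (Fin.last n).castSucc (Fin.last (n+1)) (by simp)
      simpa using this
  · rintro ⟨⟨h0, h⟩, hx⟩
    refine ⟨?_, ?_⟩
    · rw [← Fin.castSucc_zero, Fin.snoc_castSucc]
      exact h0
    · intro i j hij
      induction i using Fin.lastCases with
      | last => simp at hij; omega
      | cast i =>
        induction j using Fin.lastCases with
        | last =>
          have : i = Fin.last n := by
            ext
            simp at hij ⊢
            omega
          subst this
          simpa using hx
        | cast j =>
          simpa using h i j (by simpa using hij)

theorem walk_succ (n : ℕ) (v : Fin 3) :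
    Nat.card {f // PW (n+1) f ∧ f (Fin.last (n+1)) = v} =
    Nat.card {f // PW n f ∧ f (Fin.last n) ≠ v} := by
  symm
  refine Nat.card_eq_of_bijective
    (fun f => ⟨Fin.snoc (α := fun _ => Fin 3) f.1 v, (PW_snoc _ _ _).2 f.2, by simp⟩) ⟨?_, ?_⟩
  · rintro ⟨f, hf⟩ ⟨g, hg⟩ h
    simp only [Subtype.mk.injEq] at h
    exact Subtype.ext (Fin.snoc_injective2 h).1
  · rintro ⟨f, hf, hv⟩
    have e : Fin.snoc (α := fun _ => Fin 3) (Fin.init f) v = f := by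
      rw [← hv]; exact Fin.snoc_init_self f
    rw [← e] at hf
    exact ⟨⟨_, (PW_snoc _ _ _).1 hf⟩, Subtype.ext e⟩

theorem card_sum (n : ℕ) :
    Nat.card {f // PW n f} = ∑ v : Fin 3, Nat.card {f // PW n f ∧ f (Fin.last n) = v} := by
  classical
  simp only [Nat.card_eq_fintype_card, Fintype.card_subtype, ← Finset.filter_filter]
  exact Finset.card_eq_sum_card_fiberwise (fun _ _ => Finset.mem_coe.2 (Finset.mem_univ _))

theorem walk_total (n : ℕ) : Nat.card {f // PW n f} = 2 ^ n := by
  induction n with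
  | zero =>
    have : Unique {f // PW 0 f} :=
      { default := ⟨fun _ => 0, rfl, fun i j h => by omega⟩
        uniq := fun ⟨f, hf⟩ => by
          ext i
          have : i = 0 := by ext; simp
          subst this
          simp [hf.1] }
    simp
  | succ n ih =>
    have h1 := card_sum n
    have h2 := card_sum (n+1)
    have h3 := fun v => card_split (PW n) (fun f => f (Fin.last n) = v)
    simp only [walk_succ, Fin.sum_univ_three] at h1 h2
    have a := h3 0
    have b := h3 1
    have c := h3 2
    simp only [ne_eq] at *
    rw [pow_succ]
    omega

theorem walk_rec (n : ℕ) :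
    Nat.card {f // PW (n+1) f ∧ f (Fin.last (n+1)) = 0} +
    Nat.card {f // PW n f ∧ f (Fin.last n) = 0} = 2 ^ n := by
  rw [walk_succ, ← walk_total, ← card_split (PW n) (fun f => f (Fin.last n) = 0), add_comm]

theorem walk_zero : Nat.card {f // PW 0 f ∧ f (Fin.last 0) = 0} = 1 := by
  have h := walk_total 0
  rw [pow_zero] at h
  refine Eq.trans ?_ h
  refine Nat.card_congr (Equiv.subtypeEquivRight fun f => ⟨fun h => h.1, fun h => ⟨h, h.1⟩⟩)

theorem comp_main (n : ℕ) :
    (Nat.card {c : Composition (n+1) // ∃ a, c.blocks.head? = some a ∧ Odd a} : ℤ) -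
      (Nat.card {c : Composition (n+1) // ∃ a, c.blocks.head? = some a ∧ Even a} : ℤ) =
      Nat.card {f // PW n f ∧ f (Fin.last n) = 0} ∧
    3 * (Nat.card {f // PW n f ∧ f (Fin.last n) = 0} : ℤ) = 2 ^ n + 2 * (-1) ^ n := by
  induction n with
  | zero =>
    have h1 := comp_total 1 le_rfl
    have h2 := comp_even_succ 0
    have h3 : Nat.card {c : Composition 0 // ∃ a, c.blocks.head? = some a ∧ Odd a} = 0 := by
      have : IsEmpty {c : Composition 0 // ∃ a, c.blocks.head? = some a ∧ Odd a} := by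
        refine ⟨fun ⟨c, a, ha, _⟩ => ?_⟩
        have hc : c.blocks = [] := by simp
        simp [hc] at ha
      simp
    rw [walk_zero]
    rw [h3] at h2
    have h1' : Nat.card {c : Composition (0+1) // ∃ a, c.blocks.head? = some a ∧ Odd a} +
      Nat.card {c : Composition (0+1) // ∃ a, c.blocks.head? = some a ∧ Even a} = 1 := h1
    constructor
    · rw [h2] at h1' ⊢
      rw [add_zero] at h1'
      rw [h1']
      norm_num
    · norm_num
  | succ n ih =>
    have h1 := comp_total (n+1) (by omega)
    have h2 := comp_even_succ (n+1)
    have h3 := comp_total (n+1+1) (by omega)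
    have h4 := walk_rec n
    simp only [Nat.add_sub_cancel] at h1 h3
    zify at h1 h2 h3 h4
    obtain ⟨i1, i2⟩ := ih
    rw [pow_succ] at h3
    constructor
    · linarith
    · rw [pow_succ, pow_succ]; linarith

theorem stmt_18 (n : ℕ) (hn : 1 ≤ n) :
    (Nat.card {c : Composition n // ∃ a, c.blocks.head? = some a ∧ Odd a} : ℤ) -
      (Nat.card {c : Composition n // ∃ a, c.blocks.head? = some a ∧ Even a} : ℤ) =
      (2 ^ (n - 1) + 2 * (-1) ^ (n - 1)) / 3 ∧
    (Nat.card {c : Composition n // ∃ a, c.blocks.head? = some a ∧ Odd a} : ℤ) -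
      (Nat.card {c : Composition n // ∃ a, c.blocks.head? = some a ∧ Even a} : ℤ) =
      (Nat.card {f : Fin n → Fin 3 //
        f ⟨0, hn⟩ = 0 ∧ f ⟨n - 1, by omega⟩ = 0 ∧
        ∀ i j : Fin n, (j : ℕ) = (i : ℕ) + 1 → f i ≠ f j} : ℤ) := by
  obtain ⟨m, rfl⟩ : ∃ m, n = m + 1 := ⟨n - 1, by omega⟩
  obtain ⟨h1, h2⟩ := comp_main m
  rw [h1]
  constructor
  · simp only [Nat.add_sub_cancel]
    rw [← h2]
    simp
  · congr 1
    refine Nat.card_congr (Equiv.subtypeEquivRight fun f => ?_)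
    constructor
    · rintro ⟨⟨a, b⟩, c⟩
      exact ⟨a, c, b⟩
    · rintro ⟨a, c, b⟩
      exact ⟨⟨a, b⟩, c⟩
end
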